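/- Central limit theorem via the magic gap: let ρ be a zero-mean n-qudit state, i.e. Ξ_ρ(p⃗,q⃗) = 1 at every point where |Ξ_ρ(p⃗,q⃗)| = 1. Then for every integer N ≥ 0, ‖⊠^N ρ − M(ρ)‖₂ ≤ (1 − MG(ρ))^N ‖ρ − M(ρ)‖₂, where ‖A‖₂ = (Tr[A†A])^{1/2} is the Hilbert–Schmidt norm. In particular, if ρ ≠ M(ρ) then MG(ρ) > 0, so ⊠^N ρ converges to M(ρ) exponentially fast in N. -/

import Mathlib

open scoped BigOperators ComplexOrder Classical ENNReal
open Matrix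

namespace PaperQI

/-- The computational-basis index set `ℤ_d^n` for an `n`-qudit system. -/
abbrev QV (d n : ℕ) := Fin n → ZMod d

/-- Matrices (linear operators) on the `n`-qudit Hilbert space `(ℂ^d)^{⊗ n}`,
written in the computational basis indexed by `ℤ_d^n`. -/
abbrev Mat (d n : ℕ) := Matrix (QV d n) (QV d n) ℂ

/-- The character `ξ^z = exp(2πi z/d)` for `z ∈ ℤ_d`. -/
noncomputable def ch (d : ℕ) (z : ZMod d) : ℂ :=
  Complex.exp (2 * Real.pi * Complex.I * (z.val : ℂ) / (d : ℂ))

/-- Dot product on `ℤ_d^n`. -/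
def qdot {d n : ℕ} (p k : QV d n) : ZMod d := ∑ i, p i * k i

/-- The `n`-qudit Weyl operator `w(p,q) = ⊗_i ξ^{-2⁻¹ p_i q_i} Z^{p_i} X^{q_i}`
(for odd prime `d`).  Its matrix entries are
`w(p,q)[k+q, k] = ξ^{p·k + 2⁻¹ p·q}`. -/
noncomputable def weyl (d n : ℕ) [Fact (Nat.Prime d)] (p q : QV d n) : Mat d n :=
  Matrix.of fun k' k =>
    if k' = k + q then ch d (qdot p k + (2 : ZMod d)⁻¹ * qdot p q) else 0

/-- `ρ` is an `n`-qudit state: positive semidefinite with trace one. -/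
def IsState (d n : ℕ) [Fact (Nat.Prime d)] (ρ : Mat d n) : Prop :=
  ρ.PosSemidef ∧ ρ.trace = 1

/-- The characteristic function `Ξ_ρ(p,q) = Tr[ρ w(-p,-q)]`. -/
noncomputable def xi (d n : ℕ) [Fact (Nat.Prime d)] (ρ : Mat d n)
    (pq : QV d n × QV d n) : ℂ :=
  (ρ * weyl d n (-pq.1) (-pq.2)).trace

/-- The mean state `M(ρ) = d^{-n} ∑_{|Ξ_ρ(p,q)| = 1} Ξ_ρ(p,q) w(p,q)`. -/
noncomputable def meanState (d n : ℕ) [Fact (Nat.Prime d)] (ρ : Mat d n) : Mat d n :=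
  ((d : ℂ) ^ n)⁻¹ •
    ∑ pq : QV d n × QV d n,
      if ‖xi d n ρ pq‖ = 1 then xi d n ρ pq • weyl d n pq.1 pq.2 else 0

/-- `ρ` is a minimal stabilizer-projection state (MSPS): for some `r ≤ n` there are
mutually commuting Weyl operators `w(p_i,q_i)`, `i = 1,…,r`, whose labels generate a
subgroup of `V^n` of order `d^r`, and phases `x ∈ ℤ_d^r`, such that
`ρ = d^{-(n-r)} ∏_i ( (1/d) ∑_{k ∈ ℤ_d} (ξ^{x_i} w(p_i,q_i))^k )`. -/
noncomputable def IsMSPS (d n : ℕ) [Fact (Nat.Prime d)] (ρ : Mat d n) : Prop :=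
  ∃ r : ℕ, r ≤ n ∧
    ∃ (p q : Fin r → QV d n) (x : Fin r → ZMod d),
      (∀ i j, Commute (weyl d n (p i) (q i)) (weyl d n (p j) (q j))) ∧
      Nat.card (AddSubgroup.closure (Set.range fun i => (p i, q i)) :
        AddSubgroup (QV d n × QV d n)) = d ^ r ∧
      ρ = ((d : ℂ) ^ (n - r))⁻¹ •
        (List.ofFn fun i =>
          (d : ℂ)⁻¹ • ∑ k : ZMod d, (ch d (x i) • weyl d n (p i) (q i)) ^ k.val).prod

/-- The magic gap `MG(ρ) = 1 - max{|Ξ_ρ(p,q)| : Ξ_ρ(p,q) ≠ 0, |Ξ_ρ(p,q)| ≠ 1}`,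
and `MG(ρ) = 0` if this set is empty. -/
noncomputable def magicGap (d n : ℕ) [Fact (Nat.Prime d)] (ρ : Mat d n) : ℝ :=
  let s : Finset ℝ :=
    (Finset.univ.filter fun pq : QV d n × QV d n =>
      xi d n ρ pq ≠ 0 ∧ ‖xi d n ρ pq‖ ≠ 1).image
      fun pq => ‖xi d n ρ pq‖
  if h : s.Nonempty then 1 - s.max' h else 0

/-- Von Neumann entropy `H(ρ) = -∑ λ_i log λ_i` (natural log, eigenvalues of `ρ`),
with the convention `0 log 0 = 0`; junk value `0` on non-Hermitian matrices. -/
noncomputable def vnEnt {d n : ℕ} [Fact (Nat.Prime d)] (ρ : Mat d n) : ℝ :=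
  if h : ρ.IsHermitian then -∑ i, h.eigenvalues i * Real.log (h.eigenvalues i) else 0

/-- Rényi entropy `H_α` for `α ∈ [0,∞]`:  `H_0 = log rank`, `H_1 = H` (von Neumann),
`H_∞ = -log λ_max`, and `H_α = (1-α)⁻¹ log ∑ λ_i^α` otherwise. -/
noncomputable def renyiEnt {d n : ℕ} [Fact (Nat.Prime d)] (α : ℝ≥0∞) (ρ : Mat d n) : ℝ :=
  if h : ρ.IsHermitian then
    if α = 0 then Real.log (ρ.rank : ℝ)
    else if α = 1 then -∑ i, h.eigenvalues i * Real.log (h.eigenvalues i)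
    else if α = ⊤ then -Real.log (⨆ i, h.eigenvalues i)
    else (1 - α.toReal)⁻¹ * Real.log (∑ i, h.eigenvalues i ^ α.toReal)
  else 0

/-- Matrix logarithm on the support: `log ρ = U diag(log λ_i) U†` via the spectral
decomposition, with `log 0 = 0` on the kernel; junk value `0` off Hermitian matrices. -/
noncomputable def matLog {d n : ℕ} [Fact (Nat.Prime d)] (ρ : Mat d n) : Mat d n :=
  if h : ρ.IsHermitian then
    (h.eigenvectorUnitary : Mat d n) *
      Matrix.diagonal (fun i => (Real.log (h.eigenvalues i) : ℂ)) *
      star (h.eigenvectorUnitary : Mat d n)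
  else 0

/-- Matrix real power on the support: `ρ^t = U diag(λ_i^t) U†`, with `0^t = 0` on the
kernel (for `t ≠ 0`); junk value `0` off Hermitian matrices. -/
noncomputable def matRpow {d n : ℕ} [Fact (Nat.Prime d)] (ρ : Mat d n) (t : ℝ) : Mat d n :=
  if h : ρ.IsHermitian then
    (h.eigenvectorUnitary : Mat d n) *
      Matrix.diagonal (fun i => ((h.eigenvalues i ^ t : ℝ) : ℂ)) *
      star (h.eigenvectorUnitary : Mat d n)
  else 0

/-- Support inclusion `supp ρ ⊆ supp σ`, expressed as `ker σ ⊆ ker ρ`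
(the correct notion for positive semidefinite matrices). -/
def suppLE {d n : ℕ} [Fact (Nat.Prime d)] (ρ σ : Mat d n) : Prop :=
  ∀ v : QV d n → ℂ, σ.mulVec v = 0 → ρ.mulVec v = 0

/-- Relative entropy `D(ρ‖σ) = Tr[ρ(log ρ - log σ)]` when `supp ρ ⊆ supp σ`, else `+∞`. -/
noncomputable def relEnt {d n : ℕ} [Fact (Nat.Prime d)] (ρ σ : Mat d n) : EReal :=
  if suppLE ρ σ then (((ρ * (matLog ρ - matLog σ)).trace.re : ℝ) : EReal) else ⊤

/-- Sandwiched Rényi relative entropy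
`D_α(ρ‖σ) = (α-1)⁻¹ log Tr[(σ^{(1-α)/(2α)} ρ σ^{(1-α)/(2α)})^α]` for `α ≠ 1`
(with `+∞` when `supp ρ ⊄ supp σ`), and `D_1 = D` the relative entropy. -/
noncomputable def sandRenyi {d n : ℕ} [Fact (Nat.Prime d)] (α : ℝ) (ρ σ : Mat d n) :
    EReal :=
  if α = 1 then relEnt ρ σ
  else if suppLE ρ σ then
    let x : ℝ := (α - 1)⁻¹ * Real.log
      ((matRpow (matRpow σ ((1 - α) / (2 * α)) * ρ * matRpow σ ((1 - α) / (2 * α)))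
        α).trace.re)
    (x : EReal)
  else ⊤

/-- The key unitary `U|i,j⟩ = |N g₁₁ i - N g₁₀ j, -N g₀₁ i + N g₀₀ j⟩`,
where `N = (det G)⁻¹` in `ℤ_d`. -/
noncomputable def convU (d n : ℕ) [Fact (Nat.Prime d)] (g00 g01 g10 g11 : ZMod d) :
    Matrix (QV d n × QV d n) (QV d n × QV d n) ℂ :=
  Matrix.of fun kl ij =>
    if kl = ((fun a => (g00 * g11 - g01 * g10)⁻¹ * g11 * ij.1 a
                      - (g00 * g11 - g01 * g10)⁻¹ * g10 * ij.2 a : QV d n),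
             (fun a => -((g00 * g11 - g01 * g10)⁻¹ * g01) * ij.1 a
                      + (g00 * g11 - g01 * g10)⁻¹ * g00 * ij.2 a : QV d n))
    then 1 else 0

/-- Tensor (Kronecker) product of two `n`-qudit operators, on the doubled system. -/
def kron {d n : ℕ} (ρ σ : Mat d n) : Matrix (QV d n × QV d n) (QV d n × QV d n) ℂ :=
  Matrix.of fun ij kl => ρ ij.1 kl.1 * σ ij.2 kl.2

/-- Partial trace over the second `n`-qudit factor. -/
noncomputable def ptrB {d n : ℕ} [Fact (Nat.Prime d)]
    (M : Matrix (QV d n × QV d n) (QV d n × QV d n) ℂ) : Mat d n :=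
  Matrix.of fun i i' => ∑ j : QV d n, M (i, j) (i', j)

/-- The convolution `ρ ⊠ σ = Tr_B[U (ρ ⊗ σ) U†]` with parameter matrix
`G = [g₀₀, g₀₁; g₁₀, g₁₁]`. -/
noncomputable def conv (d n : ℕ) [Fact (Nat.Prime d)] (g00 g01 g10 g11 : ZMod d)
    (ρ σ : Mat d n) : Mat d n :=
  ptrB (convU d n g00 g01 g10 g11 * kron ρ σ * (convU d n g00 g01 g10 g11)ᴴ)

/-- The beam-splitter unitary `U_{s,t}|i,j⟩ = |s i + t j, t i - s j⟩`. -/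
noncomputable def bsU (d n : ℕ) [Fact (Nat.Prime d)] (s t : ZMod d) :
    Matrix (QV d n × QV d n) (QV d n × QV d n) ℂ :=
  Matrix.of fun kl ij =>
    if kl = ((fun a => s * ij.1 a + t * ij.2 a : QV d n),
             (fun a => t * ij.1 a - s * ij.2 a : QV d n))
    then 1 else 0

/-- The beam-splitter convolution `ρ ⊠_{s,t} σ = Tr_B[U_{s,t} (ρ ⊗ σ) U_{s,t}†]`. -/
noncomputable def bsConv (d n : ℕ) [Fact (Nat.Prime d)] (s t : ZMod d)
    (ρ σ : Mat d n) : Mat d n :=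
  ptrB (bsU d n s t * kron ρ σ * (bsU d n s t)ᴴ)

/-- Iterated self-convolution: `⊠^0 ρ = ρ` and `⊠^{N+1} ρ = (⊠^N ρ) ⊠ ρ`. -/
noncomputable def bsIter (d n : ℕ) [Fact (Nat.Prime d)] (s t : ZMod d) :
    ℕ → Mat d n → Mat d n
  | 0, ρ => ρ
  | N + 1, ρ => bsConv d n s t (bsIter d n s t N ρ) ρ

/-- `ρ` is the pure stabilizer state `|ψ⟩⟨ψ|` with stabilizer label group `S ⊆ V^n`:
`S` has order `d^n` and `ψ` is a common eigenvector of all `w(p,q)`, `(p,q) ∈ S`. -/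
noncomputable def IsPureStabilizerWithGroup (d n : ℕ) [Fact (Nat.Prime d)]
    (ρ : Mat d n) (S : AddSubgroup (QV d n × QV d n)) : Prop :=
  Nat.card S = d ^ n ∧
    ∃ ψ : QV d n → ℂ, ψ ≠ 0 ∧
      ρ = Matrix.of (fun a b => ψ a * starRingEnd ℂ (ψ b)) ∧
      ∀ pq ∈ S, ∃ c : ℂ, (weyl d n pq.1 pq.2).mulVec ψ = c • ψ

/-- `ρ` is a pure stabilizer state. -/
noncomputable def IsPureStabilizer (d n : ℕ) [Fact (Nat.Prime d)] (ρ : Mat d n) : Prop :=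
  ∃ S : AddSubgroup (QV d n × QV d n), IsPureStabilizerWithGroup d n ρ S

/-- `ρ` is a stabilizer state: a convex combination of pure stabilizer states. -/
noncomputable def IsStabilizerState (d n : ℕ) [Fact (Nat.Prime d)] (ρ : Mat d n) : Prop :=
  ∃ (m : ℕ) (p : Fin m → ℝ) (τ : Fin m → Mat d n),
    (∀ i, 0 ≤ p i) ∧ ∑ i, p i = 1 ∧ (∀ i, IsPureStabilizer d n (τ i)) ∧
    ρ = ∑ i, (p i : ℂ) • τ i

/-- `U` is a Clifford unitary: a unitary mapping each Weyl operator, under conjugation,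
to a complex phase times a Weyl operator. -/
noncomputable def IsClifford (d n : ℕ) [Fact (Nat.Prime d)] (U : Mat d n) : Prop :=
  U ∈ Matrix.unitaryGroup (QV d n) ℂ ∧
    ∀ pq : QV d n × QV d n, ∃ (c : ℂ) (pq' : QV d n × QV d n),
      ‖c‖ = 1 ∧ U * weyl d n pq.1 pq.2 * Uᴴ = c • weyl d n pq'.1 pq'.2

/-- The divergence-based quantum Fisher information `J(ρ; H) = Tr[ρ [H,[H, log ρ]]]`. -/
noncomputable def fisherJ {d n : ℕ} [Fact (Nat.Prime d)] (ρ H : Mat d n) : ℝ :=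
  (ρ * (H * (H * matLog ρ - matLog ρ * H) - (H * matLog ρ - matLog ρ * H) * H)).trace.re

/-- Embed a single-qudit operator at site `k` of an `n`-qudit system
(tensored with the identity elsewhere). -/
noncomputable def embedAt (d n : ℕ) (k : Fin n) (M : Matrix (ZMod d) (ZMod d) ℂ) :
    Mat d n :=
  Matrix.of fun v w => if ∀ i, i ≠ k → v i = w i then M (v k) (w k) else 0

/-- The rank-one projection `H_j^Z = |j⟩⟨j|` onto the eigenvector of `Z`
with eigenvalue `ξ^j`. -/
noncomputable def projZ (d : ℕ) (j : ZMod d) : Matrix (ZMod d) (ZMod d) ℂ :=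
  Matrix.of fun a b => if a = j ∧ b = j then 1 else 0

/-- The rank-one projection `H_j^X` onto the eigenvector of `X` with eigenvalue `ξ^j`;
its entries are `(H_j^X)_{a b} = d⁻¹ ξ^{j(b-a)}`. -/
noncomputable def projX (d : ℕ) (j : ZMod d) : Matrix (ZMod d) (ZMod d) ℂ :=
  Matrix.of fun a b => (d : ℂ)⁻¹ * ch d (j * (b - a))

/-- Total Fisher information
`J(ρ) = ∑_{k=1}^n ∑_{j ∈ ℤ_d} J(ρ; H_j^{X_k}) + J(ρ; H_j^{Z_k})`. -/
noncomputable def fisherTotal (d n : ℕ) [Fact (Nat.Prime d)] (ρ : Mat d n) : ℝ :=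
  ∑ k : Fin n, ∑ j : ZMod d,
    (fisherJ ρ (embedAt d n k (projX d j)) + fisherJ ρ (embedAt d n k (projZ d j)))

/-- Holevo capacity of a channel `E`:
`χ(E) = sup H(∑ p_i E(ρ_i)) - ∑ p_i H(E(ρ_i))` over finite ensembles of states. -/
noncomputable def holevoCap (d n : ℕ) [Fact (Nat.Prime d)] (E : Mat d n → Mat d n) : ℝ :=
  ⨆ m : ℕ, ⨆ p : Fin m → ℝ, ⨆ ρs : Fin m → Mat d n,
    ⨆ _ : (∀ i, 0 ≤ p i) ∧ ∑ i, p i = 1 ∧ ∀ i, IsState d n (ρs i),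
      (vnEnt (∑ i, (p i : ℂ) • E (ρs i)) - ∑ i, p i * vnEnt (E (ρs i)))

/-- Hilbert–Schmidt norm `‖A‖₂ = (Tr[A†A])^{1/2}`. -/
noncomputable def hsNorm {d n : ℕ} [Fact (Nat.Prime d)] (A : Mat d n) : ℝ :=
  Real.sqrt ((Aᴴ * A).trace.re)

/-- Trace norm `‖A‖₁ = Tr[(A†A)^{1/2}]`. -/
noncomputable def trNorm {d n : ℕ} [Fact (Nat.Prime d)] (A : Mat d n) : ℝ :=
  (matRpow (Aᴴ * A) (2⁻¹ : ℝ)).trace.re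

/-- Tensor product of an `n₁`-qudit operator with an `n₂`-qudit operator,
as an `(n₁+n₂)`-qudit operator. -/
def tensorMat (d n₁ n₂ : ℕ) (ρ₁ : Mat d n₁) (ρ₂ : Mat d n₂) : Mat d (n₁ + n₂) :=
  Matrix.of fun v w =>
    ρ₁ (fun i => v (Fin.castAdd n₂ i)) (fun i => w (Fin.castAdd n₂ i)) *
    ρ₂ (fun j => v (Fin.natAdd n₁ j)) (fun j => w (Fin.natAdd n₁ j))

/-! ### Qubit (`d = 2`) specific definitions -/

/-- The `n`-qubit Weyl (Pauli) operator `w(p,q) = ⊗_i i^{-p_i q_i} Z^{p_i} X^{q_i}`. -/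
noncomputable def weyl2 (n : ℕ) (p q : Fin n → ZMod 2) :
    Matrix (Fin n → ZMod 2) (Fin n → ZMod 2) ℂ :=
  Matrix.of fun k' k =>
    if k' = k + q then
      ∏ i, ((-Complex.I) ^ ((p i).val * (q i).val) *
        (-1 : ℂ) ^ ((p i * (k i + q i)).val))
    else 0

/-- The `n`-qubit characteristic function `Ξ_ρ(p,q) = Tr[ρ w(p,q)†]`. -/
noncomputable def xi2 (n : ℕ) (ρ : Matrix (Fin n → ZMod 2) (Fin n → ZMod 2) ℂ)
    (pq : (Fin n → ZMod 2) × (Fin n → ZMod 2)) : ℂ :=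
  (ρ * (weyl2 n pq.1 pq.2)ᴴ).trace

/-- The logarithmic magic gap
`LMG(ρ) = -log₂ max{|Ξ_ρ(p,q)| : Ξ_ρ(p,q) ≠ 0, |Ξ_ρ(p,q)| ≠ 1}` (`0` if the set is
empty). -/
noncomputable def lmg (n : ℕ) (ρ : Matrix (Fin n → ZMod 2) (Fin n → ZMod 2) ℂ) : ℝ :=
  let s : Finset ℝ :=
    (Finset.univ.filter fun pq : (Fin n → ZMod 2) × (Fin n → ZMod 2) =>
      xi2 n ρ pq ≠ 0 ∧ ‖xi2 n ρ pq‖ ≠ 1).image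
      fun pq => ‖xi2 n ρ pq‖
  if h : s.Nonempty then -Real.logb 2 (s.max' h) else 0

/-- `U` is an `n`-qubit Clifford unitary. -/
noncomputable def IsClifford2 (n : ℕ) (U : Matrix (Fin n → ZMod 2) (Fin n → ZMod 2) ℂ) :
    Prop :=
  U ∈ Matrix.unitaryGroup (Fin n → ZMod 2) ℂ ∧
    ∀ pq : (Fin n → ZMod 2) × (Fin n → ZMod 2),
      ∃ (c : ℂ) (pq' : (Fin n → ZMod 2) × (Fin n → ZMod 2)),
        ‖c‖ = 1 ∧ U * weyl2 n pq.1 pq.2 * Uᴴ = c • weyl2 n pq'.1 pq'.2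

/-- The T gate `diag(1, e^{iπ/4})` acting on qubit `k` of an `n`-qubit system. -/
noncomputable def tGateAt (n : ℕ) (k : Fin n) :
    Matrix (Fin n → ZMod 2) (Fin n → ZMod 2) ℂ :=
  embedAt 2 n k (Matrix.of fun a b =>
    if a = b then (if a = 0 then 1 else Complex.exp (Real.pi * Complex.I / 4)) else 0)

/-- An `n`-qubit state: positive semidefinite with trace one. -/
def IsState2 (n : ℕ) (ρ : Matrix (Fin n → ZMod 2) (Fin n → ZMod 2) ℂ) : Prop :=
  ρ.PosSemidef ∧ ρ.trace = 1

end PaperQI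

namespace PaperQI

/-!
The characteristic function turns the beam-splitter convolution into a product,
`Ξ_{ρ ⊠ σ}(v) = Ξ_ρ(s v) Ξ_σ(t v)`, and by Plancherel it is, up to a constant factor, an isometry
for the Hilbert–Schmidt norm, so it suffices to compare characteristic functions pointwise.
The points where `|Ξ_ρ| = 1` form a subgroup of phase space, because there
`ρ w(-v) = Ξ_ρ(v) ρ`; hence this set is preserved by multiplication with the units `s` and `t`.
On it all iterates `⊠^N ρ` have characteristic function `1`, as does `M(ρ)`. Off it `Ξ_{M(ρ)}`
vanishes and each further convolution contributes a factor `|Ξ_ρ(t v)| ≤ 1 - MG(ρ)`, while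
`v ↦ s v` merely permutes the points.
-/

section Fourier

variable {m m' 𝕜 : Type*} [Fintype m] [Fintype m'] [RCLike 𝕜]

lemma star_dotProduct_self (f : m → 𝕜) : star f ⬝ᵥ f = ((∑ i, ‖f i‖ ^ 2 : ℝ) : 𝕜) := by
  simp [dotProduct, RCLike.conj_mul]

lemma sum_norm_mulVec_sq [DecidableEq m'] {F : Matrix m m' 𝕜} {c : ℝ}
    (hF : Fᴴ * F = (c : 𝕜) • 1) (f : m' → 𝕜) :
    ∑ i, ‖(F *ᵥ f) i‖ ^ 2 = c * ∑ j, ‖f j‖ ^ 2 := by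
  have h : star (F *ᵥ f) ⬝ᵥ (F *ᵥ f) = (c : 𝕜) * (star f ⬝ᵥ f) := by
    rw [star_mulVec, ← dotProduct_mulVec, mulVec_mulVec, hF, smul_mulVec, one_mulVec,
      dotProduct_smul, smul_eq_mul]
  rw [star_dotProduct_self, star_dotProduct_self] at h
  exact_mod_cast h

lemma re_trace_conjTranspose_mul_self (A : Matrix m m' 𝕜) :
    RCLike.re (Aᴴ * A).trace = ∑ i, ∑ j, ‖A i j‖ ^ 2 := by
  have h : (Aᴴ * A).trace = ((∑ j, ∑ i, ‖A i j‖ ^ 2 : ℝ) : 𝕜) := by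
    simp [trace, mul_apply, RCLike.conj_mul]
  rw [h, RCLike.ofReal_re, Finset.sum_comm]

variable {R ι : Type*} [CommRing R] [Fintype R] [Fintype ι]

lemma addChar_sum {A M κ : Type*} [AddCommMonoid A] [CommMonoid M] (χ : AddChar A M)
    (s : Finset κ) (f : κ → A) : χ (∑ i ∈ s, f i) = ∏ i ∈ s, χ (f i) :=
  map_prod χ.toMonoidHom (fun i => Multiplicative.ofAdd (f i)) s

lemma sum_addChar_dotProduct {S : Type*} [CommRing S] [IsDomain S] [DecidableEq ι]
    {χ : AddChar R S} (hχ : χ.IsPrimitive) (a : ι → R) :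
    ∑ p : ι → R, χ (p ⬝ᵥ a) = if a = 0 then (Fintype.card R : S) ^ Fintype.card ι else 0 := by
  calc ∑ p : ι → R, χ (p ⬝ᵥ a) = ∏ i, ∑ x, χ (x * a i) := by
        simp only [dotProduct, addChar_sum, Fintype.prod_sum]
    _ = _ := by
        simp [AddChar.sum_mulShift _ hχ, Fintype.prod_ite_zero, funext_iff]

lemma sum_norm_fourier_sq [DecidableEq ι] {χ : AddChar R ℂ} (hχ : χ.IsPrimitive)
    (f : (ι → R) → ℂ) :
    ∑ p : ι → R, ‖∑ k, χ (-(p ⬝ᵥ k)) * f k‖ ^ 2 =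
      (Fintype.card R : ℝ) ^ Fintype.card ι * ∑ k, ‖f k‖ ^ 2 := by
  let F : Matrix (ι → R) (ι → R) ℂ := of fun p k => χ (-(p ⬝ᵥ k))
  refine sum_norm_mulVec_sq (F := F) ?_ f
  ext k l
  calc (Fᴴ * F) k l = ∑ p, χ (p ⬝ᵥ (k - l)) := by
        simp [F, mul_apply, ← AddChar.map_neg_eq_conj, ← AddChar.map_add_eq_mul, sub_eq_add_neg]
    _ = _ := by
        rw [sum_addChar_dotProduct hχ]
        simp [sub_eq_zero, one_apply]

end Fourier

section States

variable {m 𝕜 : Type*} [Fintype m] [RCLike 𝕜] {ρ W : Matrix m m 𝕜}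

open scoped MatrixOrder in
lemma mul_eq_zero_of_trace_conjTranspose_mul_mul_eq_zero {l : Type*} [Fintype l]
    {V : Matrix m l 𝕜} (hρ : ρ.PosSemidef) (h : (Vᴴ * ρ * V).trace = 0) : ρ * V = 0 := by
  classical
  obtain ⟨B, rfl⟩ := CStarAlgebra.nonneg_iff_eq_star_mul_self.1 hρ.nonneg
  have hBV : B * V = 0 := by
    rw [← trace_conjTranspose_mul_self_eq_zero_iff, ← h, conjTranspose_mul, star_eq_conjTranspose]
    simp only [Matrix.mul_assoc]
  rw [Matrix.mul_assoc, hBV, Matrix.mul_zero]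

variable [DecidableEq m]

-- Both sides are the variance of `W` in the state `ρ`: it is nonnegative, and it vanishes only if
-- `W` acts on `ρ` as a scalar.
lemma trace_conjTranspose_mul_mul_sub_trace_smul_one (hρ : ρ.IsHermitian) (htr : ρ.trace = 1)
    (hW : W ∈ unitaryGroup m 𝕜) :
    ((W - (ρ * W).trace • 1)ᴴ * ρ * (W - (ρ * W).trace • 1)).trace =
      ((1 - ‖(ρ * W).trace‖ ^ 2 : ℝ) : 𝕜) := by
  set c := (ρ * W).trace with hc
  have hWρW : (Wᴴ * (ρ * W)).trace = 1 := by
    rw [trace_mul_comm, Matrix.mul_assoc, ← star_eq_conjTranspose, mem_unitaryGroup_iff.1 hW,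
      Matrix.mul_one, htr]
  have hWρ : (Wᴴ * ρ).trace = star c := by
    rw [hc, ← trace_conjTranspose, conjTranspose_mul, hρ.eq]
  simp only [conjTranspose_sub, conjTranspose_smul, conjTranspose_one, Matrix.sub_mul,
    Matrix.mul_sub, Matrix.smul_mul, Matrix.mul_smul, Matrix.one_mul, Matrix.mul_one,
    Matrix.mul_assoc, trace_sub, trace_smul, smul_eq_mul, hWρW, hWρ, htr, ← hc]
  push_cast
  rw [← RCLike.conj_mul]
  simp only [RCLike.star_def]
  ring

lemma norm_trace_mul_le_one (hρ : ρ.PosSemidef) (htr : ρ.trace = 1)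
    (hW : W ∈ unitaryGroup m 𝕜) : ‖(ρ * W).trace‖ ≤ 1 := by
  have h := (hρ.conjTranspose_mul_mul_same (W - (ρ * W).trace • 1)).trace_nonneg
  rw [trace_conjTranspose_mul_mul_sub_trace_smul_one hρ.isHermitian htr hW,
    RCLike.ofReal_nonneg, sub_nonneg] at h
  exact (sq_le_one_iff₀ (norm_nonneg _)).1 h

lemma mul_eq_trace_smul_of_norm_trace_eq_one (hρ : ρ.PosSemidef) (htr : ρ.trace = 1)
    (hW : W ∈ unitaryGroup m 𝕜) (h : ‖(ρ * W).trace‖ = 1) : ρ * W = (ρ * W).trace • ρ := by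
  have hvar := trace_conjTranspose_mul_mul_sub_trace_smul_one hρ.isHermitian htr hW
  rw [h, one_pow, sub_self, RCLike.ofReal_zero] at hvar
  have hker := mul_eq_zero_of_trace_conjTranspose_mul_mul_eq_zero hρ hvar
  rwa [Matrix.mul_sub, Matrix.mul_smul, Matrix.mul_one, sub_eq_zero] at hker

end States

section Weyl

variable {d n : ℕ} [Fact d.Prime]

lemma ch_eq_stdAddChar (z : ZMod d) : ch d z = ZMod.stdAddChar z := by
  rw [ch, ZMod.stdAddChar_apply, ZMod.toCircle_apply]

lemma weyl_apply (p q k l : QV d n) :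
    weyl d n p q k l =
      if k = l + q then ZMod.stdAddChar (p ⬝ᵥ l + 2⁻¹ * (p ⬝ᵥ q)) else 0 := by
  rw [weyl, of_apply, ch_eq_stdAddChar]
  rfl

lemma weyl_zero : weyl d n 0 0 = 1 := by
  ext k l
  simp [weyl_apply, one_apply]

lemma trace_weyl (p q : QV d n) :
    (weyl d n p q).trace = if (p, q) = 0 then (d : ℂ) ^ n else 0 := by
  have h := sum_addChar_dotProduct (ZMod.isPrimitive_stdAddChar d) p
  by_cases hq : q = 0
  · simpa [trace, weyl_apply, hq, dotProduct_comm p] using h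
  · simp [trace, weyl_apply, hq]

variable [NeZero (2 : ZMod d)]

lemma weyl_mul_weyl (p q p' q' : QV d n) :
    weyl d n p q * weyl d n p' q' =
      ZMod.stdAddChar (2⁻¹ * (p ⬝ᵥ q' - p' ⬝ᵥ q)) • weyl d n (p + p') (q + q') := by
  ext k l
  simp only [mul_apply, weyl_apply, Matrix.smul_apply, smul_eq_mul, mul_ite, mul_zero,
    Finset.sum_ite_eq', Finset.mem_univ, if_true, add_assoc, add_comm q' q, ite_mul, zero_mul,
    ← AddChar.map_add_eq_mul]
  congr 2
  simp only [dotProduct_add, add_dotProduct]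
  linear_combination -add_halves (p ⬝ᵥ q')

lemma weyl_neg_mul_weyl (p q : QV d n) : weyl d n (-p) (-q) * weyl d n p q = 1 := by
  simp [weyl_mul_weyl, weyl_zero]

lemma conjTranspose_weyl (p q : QV d n) : (weyl d n p q)ᴴ = weyl d n (-p) (-q) := by
  ext k l
  by_cases hl : l = k + q
  · subst hl
    simp only [conjTranspose_apply, weyl_apply, add_neg_cancel_right, if_true]
    rw [RCLike.star_def, ← AddChar.map_neg_eq_conj]
    congr 1
    simp only [dotProduct_add, neg_dotProduct, dotProduct_neg, neg_neg]
    linear_combination -add_halves (p ⬝ᵥ q)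
  · have hk : k ≠ l + -q := fun h => hl (by simp [h])
    simp [weyl_apply, hl, hk]

lemma weyl_mem_unitaryGroup (p q : QV d n) :
    weyl d n p q ∈ unitaryGroup (QV d n) ℂ := by
  rw [mem_unitaryGroup_iff', star_eq_conjTranspose, conjTranspose_weyl, weyl_neg_mul_weyl]

end Weyl

section CharacteristicFunction

variable {d n : ℕ} [Fact d.Prime]

lemma xi_sub (A B : Mat d n) (v : QV d n × QV d n) :
    xi d n (A - B) v = xi d n A v - xi d n B v := by
  simp only [xi, Matrix.sub_mul, trace_sub]

lemma xi_zero (A : Mat d n) : xi d n A 0 = A.trace := by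
  simp [xi, weyl_zero]

lemma xi_eq_fourier (A : Mat d n) (p q : QV d n) :
    xi d n A (p, q) = ZMod.stdAddChar (2⁻¹ * (p ⬝ᵥ q)) *
      ∑ k, ZMod.stdAddChar (-(p ⬝ᵥ k)) * A k (k - q) := by
  simp only [xi, trace, diag_apply, mul_apply, weyl_apply, ← sub_eq_add_neg, mul_ite, mul_zero,
    Finset.sum_ite_eq', Finset.mem_univ, if_true, Finset.mul_sum, neg_dotProduct,
    dotProduct_neg, neg_neg, AddChar.map_add_eq_mul]
  exact Finset.sum_congr rfl fun k _ => by ring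

lemma hsNorm_nonneg (A : Mat d n) : 0 ≤ hsNorm A :=
  Real.sqrt_nonneg _

lemma hsNorm_sq (A : Mat d n) : hsNorm A ^ 2 = ∑ k, ∑ l, ‖A k l‖ ^ 2 := by
  have h : (Aᴴ * A).trace.re = ∑ k, ∑ l, ‖A k l‖ ^ 2 := re_trace_conjTranspose_mul_self A
  rw [hsNorm, h, Real.sq_sqrt (by positivity)]

lemma sum_norm_xi_sq (A : Mat d n) :
    ∑ v, ‖xi d n A v‖ ^ 2 = (d : ℝ) ^ n * hsNorm A ^ 2 := by
  have norm_xi : ∀ p q, ‖xi d n A (p, q)‖ =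
      ‖∑ k, ZMod.stdAddChar (-(p ⬝ᵥ k)) * A k (k - q)‖ := fun p q => by
    rw [xi_eq_fourier, norm_mul, AddChar.norm_apply, one_mul]
  calc ∑ v, ‖xi d n A v‖ ^ 2
      = ∑ q, ∑ p, ‖∑ k, ZMod.stdAddChar (-(p ⬝ᵥ k)) * A k (k - q)‖ ^ 2 := by
        simp only [Fintype.sum_prod_type_right, norm_xi]
    _ = ∑ q, (d : ℝ) ^ n * ∑ k, ‖A k (k - q)‖ ^ 2 := by
        simp only [sum_norm_fourier_sq (ZMod.isPrimitive_stdAddChar d), ZMod.card, Fintype.card_fin]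
    _ = (d : ℝ) ^ n * ∑ k, ∑ q, ‖A k (k - q)‖ ^ 2 := by
        rw [← Finset.mul_sum, Finset.sum_comm]
    _ = (d : ℝ) ^ n * hsNorm A ^ 2 := by
        rw [hsNorm_sq]
        congr! 2 with k
        exact (Equiv.subLeft k).sum_comp fun l => ‖A k l‖ ^ 2

lemma xi_injective : Function.Injective (xi d n) := fun A B h => by
  have hsum : ∑ v, ‖xi d n (A - B) v‖ ^ 2 = 0 := by simp [xi_sub, h]
  have hd : (d : ℝ) ^ n ≠ 0 := pow_ne_zero _ (NeZero.ne _)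
  rw [sum_norm_xi_sq, mul_eq_zero_iff_left hd, hsNorm_sq,
    Finset.sum_eq_zero_iff_of_nonneg fun _ _ => by positivity] at hsum
  ext k l
  have hk := hsum k (Finset.mem_univ k)
  rw [Finset.sum_eq_zero_iff_of_nonneg fun _ _ => by positivity] at hk
  simpa [sub_eq_zero] using hk l (Finset.mem_univ l)

lemma hsNorm_le_of_norm_xi_le {A B : Mat d n} (e : Equiv.Perm (QV d n × QV d n)) {c : ℝ}
    (hc : 0 ≤ c) (h : ∀ v, ‖xi d n A v‖ ≤ c * ‖xi d n B (e v)‖) :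
    hsNorm A ≤ c * hsNorm B := by
  have hd : (0 : ℝ) < (d : ℝ) ^ n := pow_pos (Nat.cast_pos.2 (NeZero.pos d)) n
  refine le_of_sq_le_sq ?_ (mul_nonneg hc (hsNorm_nonneg B))
  refine le_of_mul_le_mul_left ?_ hd
  calc (d : ℝ) ^ n * hsNorm A ^ 2 = ∑ v, ‖xi d n A v‖ ^ 2 := (sum_norm_xi_sq A).symm
    _ ≤ ∑ v, c ^ 2 * ‖xi d n B (e v)‖ ^ 2 :=
        Finset.sum_le_sum fun v _ => by
          rw [← mul_pow]
          exact pow_le_pow_left₀ (norm_nonneg _) (h v) 2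
    _ = c ^ 2 * ∑ v, ‖xi d n B v‖ ^ 2 := by
        rw [← Finset.mul_sum, Equiv.sum_comp e fun v => ‖xi d n B v‖ ^ 2]
    _ = (d : ℝ) ^ n * (c * hsNorm B) ^ 2 := by
        rw [sum_norm_xi_sq]
        ring

variable [NeZero (2 : ZMod d)]

lemma xi_weyl (u v : QV d n × QV d n) :
    xi d n (weyl d n u.1 u.2) v = if u = v then (d : ℂ) ^ n else 0 := by
  rw [xi, weyl_mul_weyl, trace_smul, trace_weyl]
  simp only [← sub_eq_add_neg, ← Prod.mk_sub_mk, Prod.mk.eta, sub_eq_zero]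
  split_ifs with h
  · simp [h]
  · simp

lemma xi_meanState (ρ : Mat d n) (v : QV d n × QV d n) :
    xi d n (meanState d n ρ) v = if ‖xi d n ρ v‖ = 1 then xi d n ρ v else 0 := by
  have hd : (d : ℂ) ^ n ≠ 0 := pow_ne_zero _ (NeZero.ne _)
  calc xi d n (meanState d n ρ) v
      = ((d : ℂ) ^ n)⁻¹ * ∑ u, (if ‖xi d n ρ u‖ = 1 then xi d n ρ u else 0) *
          xi d n (weyl d n u.1 u.2) v := by
        rw [xi, meanState, Matrix.smul_mul, Finset.sum_mul, trace_smul, trace_sum, smul_eq_mul]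
        congr! 2 with u
        split_ifs
        · rw [Matrix.smul_mul, trace_smul, smul_eq_mul, ← xi]
        · rw [Matrix.zero_mul, trace_zero, zero_mul]
    _ = if ‖xi d n ρ v‖ = 1 then xi d n ρ v else 0 := by
        simp [xi_weyl, mul_comm _ ((d : ℂ) ^ n), hd]

end CharacteristicFunction

section Stabilizer

variable {d n : ℕ} [Fact d.Prime] [NeZero (2 : ZMod d)] {ρ : Mat d n}

lemma norm_xi_le_one (hρ : IsState d n ρ) (v : QV d n × QV d n) : ‖xi d n ρ v‖ ≤ 1 :=
  norm_trace_mul_le_one hρ.1 hρ.2 (weyl_mem_unitaryGroup _ _)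

lemma mul_weyl_of_norm_xi_eq_one (hρ : IsState d n ρ) {v : QV d n × QV d n}
    (hv : ‖xi d n ρ v‖ = 1) : ρ * weyl d n (-v.1) (-v.2) = xi d n ρ v • ρ :=
  mul_eq_trace_smul_of_norm_trace_eq_one hρ.1 hρ.2 (weyl_mem_unitaryGroup _ _) hv

lemma norm_xi_add_eq_one (hρ : IsState d n ρ) {u v : QV d n × QV d n}
    (hu : ‖xi d n ρ u‖ = 1) (hv : ‖xi d n ρ v‖ = 1) : ‖xi d n ρ (u + v)‖ = 1 := by
  have htrace : (ρ * weyl d n (-u.1) (-u.2) * weyl d n (-v.1) (-v.2)).trace =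
      xi d n ρ u * xi d n ρ v := by
    rw [mul_weyl_of_norm_xi_eq_one hρ hu, Matrix.smul_mul, trace_smul, smul_eq_mul, xi, xi]
  rw [Matrix.mul_assoc, weyl_mul_weyl, Matrix.mul_smul, trace_smul, smul_eq_mul, ← neg_add,
    ← neg_add] at htrace
  have hnorm := congrArg norm htrace
  rwa [norm_mul, norm_mul, hu, hv, AddChar.norm_apply, one_mul, one_mul] at hnorm

lemma norm_xi_neg (hρ : ρ.IsHermitian) (v : QV d n × QV d n) :
    ‖xi d n ρ (-v)‖ = ‖xi d n ρ v‖ := by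
  have h : xi d n ρ (-v) = star (xi d n ρ v) := by
    rw [xi, xi, ← trace_conjTranspose, conjTranspose_mul, conjTranspose_weyl, hρ.eq,
      trace_mul_comm, Prod.fst_neg, Prod.snd_neg]
  rw [h, norm_star]

/-- The phase-space points at which the characteristic function of a state has modulus one, i.e.
the labels of the Weyl operators that stabilize the state up to a phase. -/
def stabilizer (hρ : IsState d n ρ) : AddSubgroup (QV d n × QV d n) where
  carrier := {v | ‖xi d n ρ v‖ = 1}
  zero_mem' := by simp [xi_zero, hρ.2]
  add_mem' := norm_xi_add_eq_one hρ
  neg_mem' := (norm_xi_neg hρ.1.isHermitian _).trans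

lemma norm_xi_smul_eq_one_iff (hρ : IsState d n ρ) {c : ZMod d} (hc : c ≠ 0)
    {v : QV d n × QV d n} : ‖xi d n ρ (c • v)‖ = 1 ↔ ‖xi d n ρ v‖ = 1 :=
  (AddSubgroup.toZModSubmodule d (stabilizer hρ)).smul_mem_iff hc

end Stabilizer

section BeamSplitter

open scoped Kronecker

variable {d n : ℕ}

lemma kron_eq_kronecker (A B : Mat d n) : kron A B = A ⊗ₖ B := rfl

/-- The action of the beam splitter `U_{s,t}` on computational basis labels. -/
def bsMap (s t : ZMod d) (x : QV d n × QV d n) : QV d n × QV d n :=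
  (s • x.1 + t • x.2, t • x.1 - s • x.2)

lemma bsMap_involutive {s t : ZMod d} (hst : s ^ 2 + t ^ 2 = 1) :
    Function.Involutive (bsMap (n := n) s t) := fun x => by
  ext i
  · simp only [bsMap, Pi.add_apply, Pi.sub_apply, Pi.smul_apply, smul_eq_mul]
    linear_combination x.1 i * hst
  · simp only [bsMap, Pi.add_apply, Pi.sub_apply, Pi.smul_apply, smul_eq_mul]
    linear_combination x.2 i * hst

lemma bsMap_add_smul {s t : ZMod d} (hst : s ^ 2 + t ^ 2 = 1) (x : QV d n × QV d n) (q : QV d n) :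
    bsMap s t (x + (s • q, t • q)) = bsMap s t x + (q, 0) := by
  ext i
  · simp only [bsMap, Prod.fst_add, Prod.snd_add, Pi.add_apply, Pi.smul_apply, smul_eq_mul]
    linear_combination q i * hst
  · simp only [bsMap, Prod.fst_add, Prod.snd_add, Pi.add_apply, Pi.sub_apply, Pi.smul_apply,
      Pi.zero_apply, smul_eq_mul]
    ring

lemma bsMap_eq_bsMap_add_iff {s t : ZMod d} (hst : s ^ 2 + t ^ 2 = 1) (q : QV d n)
    (x y : QV d n × QV d n) :
    bsMap s t x = bsMap s t y + (q, 0) ↔ x = y + (s • q, t • q) := by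
  rw [← bsMap_add_smul hst, (bsMap_involutive hst).injective.eq_iff]

variable [Fact d.Prime]

lemma trace_ptrB_mul (M : Matrix (QV d n × QV d n) (QV d n × QV d n) ℂ) (W : Mat d n) :
    (ptrB M * W).trace = (M * kron W 1).trace := by
  simp only [trace, diag_apply, mul_apply, ptrB, kron, of_apply, Fintype.sum_prod_type,
    one_apply, mul_ite, mul_one, mul_zero, Finset.sum_ite_eq', Finset.mem_univ, if_true,
    Finset.sum_mul]
  exact Finset.sum_congr rfl fun _ _ => Finset.sum_comm

lemma conjTranspose_bsU_mul_mul_bsU (s t : ZMod d)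
    (M : Matrix (QV d n × QV d n) (QV d n × QV d n) ℂ) :
    (bsU d n s t)ᴴ * M * bsU d n s t = M.submatrix (bsMap s t) (bsMap s t) := by
  have bsU_eq : bsU d n s t = (1 : Matrix _ _ ℂ).submatrix id (bsMap s t) := rfl
  rw [bsU_eq, conjTranspose_submatrix, conjTranspose_one]
  ext x y
  simp [mul_apply, one_apply]

lemma submatrix_bsMap_kron_weyl_one {s t : ZMod d} (hst : s ^ 2 + t ^ 2 = 1) (p q : QV d n) :
    (kron (weyl d n p q) 1).submatrix (bsMap s t) (bsMap s t) =
      kron (weyl d n (s • p) (s • q)) (weyl d n (t • p) (t • q)) := by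
  have phase : ∀ y : QV d n × QV d n, p ⬝ᵥ (bsMap s t y).1 + 2⁻¹ * (p ⬝ᵥ q) =
      (s • p) ⬝ᵥ y.1 + 2⁻¹ * ((s • p) ⬝ᵥ (s • q)) +
        ((t • p) ⬝ᵥ y.2 + 2⁻¹ * ((t • p) ⬝ᵥ (t • q))) := fun y => by
    simp only [bsMap, dotProduct_add, dotProduct_smul, smul_dotProduct, smul_eq_mul]
    linear_combination (-2⁻¹ * (p ⬝ᵥ q)) * hst
  ext x y
  calc kron (weyl d n p q) 1 (bsMap s t x) (bsMap s t y)
      = if bsMap s t x = bsMap s t y + (q, 0) then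
          ZMod.stdAddChar (p ⬝ᵥ (bsMap s t y).1 + 2⁻¹ * (p ⬝ᵥ q)) else 0 := by
        simp only [kron, of_apply, weyl_apply, one_apply, ite_zero_mul_ite_zero, mul_one,
          Prod.ext_iff, Prod.fst_add, Prod.snd_add, add_zero]
    _ = if x = y + (s • q, t • q) then
          ZMod.stdAddChar ((s • p) ⬝ᵥ y.1 + 2⁻¹ * ((s • p) ⬝ᵥ (s • q))) *
            ZMod.stdAddChar ((t • p) ⬝ᵥ y.2 + 2⁻¹ * ((t • p) ⬝ᵥ (t • q))) else 0 := by
        simp only [bsMap_eq_bsMap_add_iff hst, phase, AddChar.map_add_eq_mul]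
    _ = kron (weyl d n (s • p) (s • q)) (weyl d n (t • p) (t • q)) x y := by
        simp only [kron, of_apply, weyl_apply, ite_zero_mul_ite_zero, Prod.ext_iff,
          Prod.fst_add, Prod.snd_add]

lemma xi_bsConv {s t : ZMod d} (hst : s ^ 2 + t ^ 2 = 1) (A B : Mat d n)
    (v : QV d n × QV d n) :
    xi d n (bsConv d n s t A B) v = xi d n A (s • v) * xi d n B (t • v) := by
  set U := bsU d n s t
  set W := weyl d n (-v.1) (-v.2)
  calc xi d n (bsConv d n s t A B) v = (U * kron A B * Uᴴ * kron W 1).trace := trace_ptrB_mul _ _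
    _ = (kron A B * (Uᴴ * kron W 1 * U)).trace := by
        simp only [Matrix.mul_assoc]
        rw [trace_mul_comm]
        simp only [Matrix.mul_assoc]
    _ = (kron A B *
          kron (weyl d n (s • -v.1) (s • -v.2)) (weyl d n (t • -v.1) (t • -v.2))).trace := by
        rw [conjTranspose_bsU_mul_mul_bsU, submatrix_bsMap_kron_weyl_one hst]
    _ = xi d n A (s • v) * xi d n B (t • v) := by
        simp only [kron_eq_kronecker, ← mul_kronecker_mul, trace_kronecker, xi, smul_neg,
          Prod.smul_fst, Prod.smul_snd]

end BeamSplitter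

section MagicGap

variable {d n : ℕ} [Fact d.Prime] {ρ : Mat d n}

lemma isGreatest_one_sub_magicGap (h : ∃ v, xi d n ρ v ≠ 0 ∧ ‖xi d n ρ v‖ ≠ 1) :
    IsGreatest ((‖xi d n ρ ·‖) '' {v | xi d n ρ v ≠ 0 ∧ ‖xi d n ρ v‖ ≠ 1})
      (1 - magicGap d n ρ) := by
  set S := (Finset.univ.filter fun v => xi d n ρ v ≠ 0 ∧ ‖xi d n ρ v‖ ≠ 1).image
    (‖xi d n ρ ·‖) with hS
  have hne : S.Nonempty := by simpa [hS, Finset.filter_nonempty_iff] using h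
  have hgap : 1 - magicGap d n ρ = S.max' hne := by
    simp only [magicGap]
    rw [dif_pos hne, sub_sub_cancel]
  have hcoe : (S : Set ℝ) = (‖xi d n ρ ·‖) '' {v | xi d n ρ v ≠ 0 ∧ ‖xi d n ρ v‖ ≠ 1} := by
    simp [hS]
  rw [hgap, ← hcoe]
  exact S.isGreatest_max' hne

lemma magicGap_eq_zero (h : ¬∃ v, xi d n ρ v ≠ 0 ∧ ‖xi d n ρ v‖ ≠ 1) : magicGap d n ρ = 0 := by
  simp only [magicGap]
  rw [dif_neg]
  simpa [Finset.filter_nonempty_iff] using h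

lemma magicGap_le_one (ρ : Mat d n) : magicGap d n ρ ≤ 1 := by
  by_cases h : ∃ v, xi d n ρ v ≠ 0 ∧ ‖xi d n ρ v‖ ≠ 1
  · obtain ⟨v, -, hv⟩ := (isGreatest_one_sub_magicGap h).1
    linarith [norm_nonneg (xi d n ρ v)]
  · rw [magicGap_eq_zero h]
    exact zero_le_one

lemma norm_xi_le_one_sub_magicGap {v : QV d n × QV d n} (hv : ‖xi d n ρ v‖ ≠ 1) :
    ‖xi d n ρ v‖ ≤ 1 - magicGap d n ρ := by
  by_cases h0 : xi d n ρ v = 0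
  · rw [h0, norm_zero]
    exact sub_nonneg.2 (magicGap_le_one ρ)
  · exact (isGreatest_one_sub_magicGap ⟨v, h0, hv⟩).2 ⟨v, ⟨h0, hv⟩, rfl⟩

variable [NeZero (2 : ZMod d)]

lemma magicGap_pos (hρ : IsState d n ρ) (hne : ρ ≠ meanState d n ρ) : 0 < magicGap d n ρ := by
  have h : ∃ v, xi d n ρ v ≠ 0 ∧ ‖xi d n ρ v‖ ≠ 1 := by
    by_contra! hall
    refine hne (xi_injective (funext fun v => ?_))
    rw [xi_meanState]
    by_cases h0 : xi d n ρ v = 0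
    · simp [h0]
    · rw [if_pos (hall v h0)]
  obtain ⟨v, ⟨-, hv⟩, hmax⟩ := (isGreatest_one_sub_magicGap h).1
  have hlt : ‖xi d n ρ v‖ < 1 := (norm_xi_le_one hρ v).lt_of_ne hv
  linarith

end MagicGap

section Convergence

variable {d n : ℕ} [Fact d.Prime] [NeZero (2 : ZMod d)] {s t : ZMod d} {ρ : Mat d n}

/-- A zero-mean state: its characteristic function equals one wherever it has modulus one. -/
def IsZeroMean (ρ : Mat d n) : Prop :=
  ∀ v, ‖xi d n ρ v‖ = 1 → xi d n ρ v = 1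

lemma xi_bsConv_eq_one (hs : s ≠ 0) (ht : t ≠ 0) (hst : s ^ 2 + t ^ 2 = 1) (hρ : IsState d n ρ)
    (hzero : IsZeroMean ρ) {A : Mat d n} (hA : ∀ v, ‖xi d n ρ v‖ = 1 → xi d n A v = 1)
    (v : QV d n × QV d n) (hv : ‖xi d n ρ v‖ = 1) : xi d n (bsConv d n s t A ρ) v = 1 := by
  rw [xi_bsConv hst, hA _ ((norm_xi_smul_eq_one_iff hρ hs).2 hv),
    hzero _ ((norm_xi_smul_eq_one_iff hρ ht).2 hv), one_mul]

lemma xi_bsIter_eq_one (hs : s ≠ 0) (ht : t ≠ 0) (hst : s ^ 2 + t ^ 2 = 1) (hρ : IsState d n ρ)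
    (hzero : IsZeroMean ρ) (N : ℕ) :
    ∀ v, ‖xi d n ρ v‖ = 1 → xi d n (bsIter d n s t N ρ) v = 1 := by
  induction N with
  | zero => exact hzero
  | succ N ih => exact xi_bsConv_eq_one hs ht hst hρ hzero ih

lemma norm_xi_bsConv_sub_meanState_le (hs : s ≠ 0) (ht : t ≠ 0) (hst : s ^ 2 + t ^ 2 = 1)
    (hρ : IsState d n ρ) (hzero : IsZeroMean ρ) {A : Mat d n}
    (hA : ∀ v, ‖xi d n ρ v‖ = 1 → xi d n A v = 1) (v : QV d n × QV d n) :
    ‖xi d n (bsConv d n s t A ρ - meanState d n ρ) v‖ ≤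
      (1 - magicGap d n ρ) * ‖xi d n (A - meanState d n ρ) (s • v)‖ := by
  have hgap : 0 ≤ 1 - magicGap d n ρ := sub_nonneg.2 (magicGap_le_one ρ)
  simp only [xi_sub, xi_meanState, norm_xi_smul_eq_one_iff hρ hs]
  by_cases hv : ‖xi d n ρ v‖ = 1
  · rw [if_pos hv, xi_bsConv_eq_one hs ht hst hρ hzero hA v hv, hzero v hv, sub_self, norm_zero]
    positivity
  · have htv : ‖xi d n ρ (t • v)‖ ≠ 1 := (norm_xi_smul_eq_one_iff hρ ht).not.2 hv
    rw [if_neg hv, if_neg hv, sub_zero, sub_zero, xi_bsConv hst, norm_mul, mul_comm]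
    gcongr
    exact norm_xi_le_one_sub_magicGap htv

lemma hsNorm_bsConv_sub_meanState_le (hs : s ≠ 0) (ht : t ≠ 0) (hst : s ^ 2 + t ^ 2 = 1)
    (hρ : IsState d n ρ) (hzero : IsZeroMean ρ) {A : Mat d n}
    (hA : ∀ v, ‖xi d n ρ v‖ = 1 → xi d n A v = 1) :
    hsNorm (bsConv d n s t A ρ - meanState d n ρ) ≤
      (1 - magicGap d n ρ) * hsNorm (A - meanState d n ρ) :=
  hsNorm_le_of_norm_xi_le (MulAction.toPerm (Units.mk0 s hs)) (sub_nonneg.2 (magicGap_le_one ρ))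
    (norm_xi_bsConv_sub_meanState_le hs ht hst hρ hzero hA)

lemma hsNorm_bsIter_sub_meanState_le (hs : s ≠ 0) (ht : t ≠ 0) (hst : s ^ 2 + t ^ 2 = 1)
    (hρ : IsState d n ρ) (hzero : IsZeroMean ρ) (N : ℕ) :
    hsNorm (bsIter d n s t N ρ - meanState d n ρ) ≤
      (1 - magicGap d n ρ) ^ N * hsNorm (ρ - meanState d n ρ) := by
  have hgap : 0 ≤ 1 - magicGap d n ρ := sub_nonneg.2 (magicGap_le_one ρ)
  induction N with
  | zero => rw [pow_zero, one_mul, bsIter]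
  | succ N ih =>
    calc hsNorm (bsIter d n s t (N + 1) ρ - meanState d n ρ)
        ≤ (1 - magicGap d n ρ) * hsNorm (bsIter d n s t N ρ - meanState d n ρ) :=
          hsNorm_bsConv_sub_meanState_le hs ht hst hρ hzero
            (xi_bsIter_eq_one hs ht hst hρ hzero N)
      _ ≤ (1 - magicGap d n ρ) * ((1 - magicGap d n ρ) ^ N * hsNorm (ρ - meanState d n ρ)) := by
          gcongr
      _ = (1 - magicGap d n ρ) ^ (N + 1) * hsNorm (ρ - meanState d n ρ) := by ring

end Convergence

lemma two_ne_zero_of_odd {d : ℕ} [Fact d.Prime] (hd : Odd d) : (2 : ZMod d) ≠ 0 := by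
  intro h
  have hdvd : d ∣ 2 := (ZMod.natCast_eq_zero_iff 2 d).1 (by exact_mod_cast h)
  rw [(Nat.prime_dvd_prime_iff_eq Fact.out Nat.prime_two).1 hdvd] at hd
  exact absurd hd (by decide)

/-- Central limit theorem via the magic gap: if `ρ` is a zero-mean
state (i.e. `Ξ_ρ = 1` wherever `|Ξ_ρ| = 1`), then for every `N`,
`‖⊠^N ρ - M(ρ)‖₂ ≤ (1 - MG(ρ))^N ‖ρ - M(ρ)‖₂`; moreover if `ρ ≠ M(ρ)` then
`MG(ρ) > 0`, so the convergence is exponentially fast. -/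
theorem statement19 (d n : ℕ) [Fact (Nat.Prime d)] (hd : Odd d) (hn : 1 ≤ n)
    (s t : ZMod d) (hs : s ≠ 0) (ht : t ≠ 0) (hst : s ^ 2 + t ^ 2 = 1)
    (ρ : Mat d n) (hρ : IsState d n ρ)
    (hzero : ∀ pq : QV d n × QV d n, ‖xi d n ρ pq‖ = 1 → xi d n ρ pq = 1) :
    (∀ N : ℕ, hsNorm (bsIter d n s t N ρ - meanState d n ρ) ≤
        (1 - magicGap d n ρ) ^ N * hsNorm (ρ - meanState d n ρ)) ∧
    (ρ ≠ meanState d n ρ → 0 < magicGap d n ρ) := by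
  have : NeZero (2 : ZMod d) := ⟨two_ne_zero_of_odd hd⟩
  exact ⟨hsNorm_bsIter_sub_meanState_le hs ht hst hρ hzero, magicGap_pos hρ⟩

end PaperQI
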